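/- Let 𝒢 be a finite dimensional split semisimple Lie algebra over a field 𝔽 of characteristic zero with splitting Cartan subalgebra ℋ and root system R. Let 𝒱 be a finite dimensional 𝒢-module with weight space decomposition with respect to ℋ and set of weights Π. If α ∈ R is a nonzero root and λ ∈ Π are such that α + λ ∈ Π, then 𝒢_α · 𝒱_λ ≠ {0}. -/

import Mathlib

/-!
Choose an `sl₂`-triple `(h, e, f)` with `e ∈ 𝒢_α`, `f ∈ 𝒢_{-α}`, and nonzero `v ∈ V_lam`,
`w ∈ V_{α + lam}`. If `e` kills `v`, then `v` is primitive, so `lam h` is a natural number and `w`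
has positive `h`-eigenvalue `lam h + 2`. On eigenvectors of positive eigenvalue of a
finite-dimensional module `e f` is injective: if `e f w = 0`, then `f` carries `e ^ (k + 1) w` to a
nonzero multiple of `e ^ k w`, so no power of `e` could kill `w`. Hence `e` does not kill
`f w ∈ V_lam`.
-/

/-- The weight space of a module `V` over a Lie algebra `G` with respect to a
subalgebra `H`, for a functional `χ` on `H`: vectors on which every `h ∈ H`
acts as multiplication by `χ h`. -/
def wtSpace {F G V : Type*} [Field F] [LieRing G] [LieAlgebra F G]
    [AddCommGroup V] [Module F V] [LieRingModule G V] [LieModule F G V]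
    (H : LieSubalgebra F G) (χ : Module.Dual F H) : Submodule F V where
  carrier := {v | ∀ h : H, ⁅(h : G), v⁆ = χ h • v}
  add_mem' := by
    intro a b ha hb h
    rw [lie_add, ha h, hb h, smul_add]
  zero_mem' := by
    intro h
    simp
  smul_mem' := by
    intro c v hv h
    rw [lie_smul, hv h, smul_comm]

section Sl2

open LieModule

variable {R L M : Type*} [CommRing R] [LieRing L] [LieAlgebra R L]
  [AddCommGroup M] [Module R M] [LieRingModule L M] [LieModule R L M]
  {h e f : L} {μ : R} {v w : M}

lemma lie_f_pow_succ_toEnd_e (t : IsSl2Triple h e f) (hw : ⁅h, w⁆ = μ • w) (k : ℕ) :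
    ⁅f, (toEnd R L M e ^ (k + 1)) w⁆ =
      (toEnd R L M e ^ (k + 1)) ⁅f, w⁆ - ((k + 1) * (μ + k)) • (toEnd R L M e ^ k) w := by
  have lie_f_lie_e (m : M) : ⁅f, ⁅e, m⁆⁆ = ⁅e, ⁅f, m⁆⁆ - ⁅h, m⁆ := by
    rw [leibniz_lie e f m, t.lie_e_f, add_sub_cancel_left]
  induction k with
  | zero => simp [lie_f_lie_e, hw]
  | succ k ih =>
    rw [← IsSl2Triple.lie_e_pow_toEnd_e, lie_f_lie_e, t.lie_h_pow_toEnd_e hw, ih, lie_sub,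
      lie_smul, IsSl2Triple.lie_e_pow_toEnd_e, IsSl2Triple.lie_e_pow_toEnd_e, sub_sub, ← add_smul]
    congr 2
    push_cast
    ring

variable [IsDomain R] [CharZero R] [Module.IsTorsionFree R M] [IsNoetherian R M]

lemma exists_pow_toEnd_e_eq_zero (t : IsSl2Triple h e f) (hw : ⁅h, w⁆ = μ • w) :
    ∃ k : ℕ, (toEnd R L M e ^ k) w = 0 := by
  by_contra! pow_ne_zero
  have injective_eigenvalue : Function.Injective fun k : ℕ ↦ μ + 2 * (k : R) :=
    fun i j hij ↦ by simpa using hij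
  have linearIndependent_pow : LinearIndependent R fun k : ℕ ↦ (toEnd R L M e ^ k) w :=
    (toEnd R L M h).eigenvectors_linearIndependent' _ injective_eigenvalue _ fun k ↦
      ⟨Module.End.mem_eigenspace_iff.mpr (t.lie_h_pow_toEnd_e hw k), pow_ne_zero k⟩
  exact not_finite_iff_infinite.mpr inferInstance linearIndependent_pow.finite

lemma lie_e_lie_f_ne_zero (t : IsSl2Triple h e f) (hw : ⁅h, w⁆ = μ • w) (hw0 : w ≠ 0)
    (hμ : ∀ k : ℕ, μ + k ≠ 0) : ⁅e, ⁅f, w⁆⁆ ≠ 0 := by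
  intro hefw
  obtain ⟨k, pow_ne_zero, pow_succ_eq_zero⟩ :=
    Nat.exists_not_and_succ_of_not_zero_of_exists (p := fun k ↦ (toEnd R L M e ^ k) w = 0)
      hw0 (exists_pow_toEnd_e_eq_zero t hw)
  have pow_lie_f_eq_zero : (toEnd R L M e ^ (k + 1)) ⁅f, w⁆ = 0 := by
    rw [pow_succ, Module.End.mul_apply, toEnd_apply_apply, hefw, map_zero]
  have smul_pow_eq_zero : ((k + 1) * (μ + k)) • (toEnd R L M e ^ k) w = 0 := by
    simpa [pow_succ_eq_zero, pow_lie_f_eq_zero] using lie_f_pow_succ_toEnd_e t hw k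
  exact smul_ne_zero (mul_ne_zero (Nat.cast_add_one_ne_zero k) (hμ k)) pow_ne_zero smul_pow_eq_zero

lemma lie_e_ne_zero_or_lie_e_lie_f_ne_zero (t : IsSl2Triple h e f)
    (hv : ⁅h, v⁆ = μ • v) (hv0 : v ≠ 0) (hw : ⁅h, w⁆ = (μ + 2) • w) (hw0 : w ≠ 0) :
    ⁅e, v⁆ ≠ 0 ∨ ⁅e, ⁅f, w⁆⁆ ≠ 0 := by
  refine or_iff_not_imp_left.mpr fun hev ↦ lie_e_lie_f_ne_zero t hw hw0 fun k ↦ ?_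
  have primitive : t.HasPrimitiveVectorWith v μ := ⟨hv0, hv, not_not.mp hev⟩
  obtain ⟨n, rfl⟩ := primitive.exists_nat
  exact_mod_cast (by lia : n + 2 + k ≠ 0)

end Sl2

section WeightSpaces

open LieAlgebra

variable {F G V : Type*} [Field F] [LieRing G] [LieAlgebra F G]
  [AddCommGroup V] [Module F V] [LieRingModule G V] [LieModule F G V]
  {H : LieSubalgebra F G} {χ ψ : Module.Dual F H}

lemma lie_mem_wtSpace_add {x : G} {v : V} (hx : x ∈ wtSpace H χ) (hv : v ∈ wtSpace H ψ) :
    ⁅x, v⁆ ∈ wtSpace H (χ + ψ) := fun y ↦ by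
  rw [leibniz_lie, hx y, hv y, smul_lie, lie_smul, ← add_smul, LinearMap.add_apply]

lemma isTriangularizable_of_iSup_wtSpace_eq_top
    (hV : (⨆ χ : Module.Dual F H, (wtSpace H χ : Submodule F V)) = ⊤) :
    LieModule.IsTriangularizable F H V where
  maxGenEigenspace_eq_top y := by
    rw [eq_top_iff, ← hV]
    refine iSup_le fun χ ↦ le_iSup_of_le (χ y) fun v hv ↦ ?_
    exact Module.End.eigenspace_le_maxGenEigenspace (Module.End.mem_eigenspace_iff.mpr (hv y))

variable [FiniteDimensional F G] [IsKilling F G] [H.IsCartanSubalgebra]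
  [LieModule.IsTriangularizable F H G]

lemma wtSpace_eq_rootSpace [PerfectField F] (χ : Module.Dual F H) :
    wtSpace H χ = (rootSpace H χ).toSubmodule := by
  ext x
  refine ⟨fun hx ↦ ?_, fun hx ↦ IsKilling.lie_eq_smul_of_mem_rootSpace hx⟩
  exact LieModule.weightSpace_le_genWeightSpace G _ ((LieModule.mem_weightSpace _ _).mpr hx)

lemma exists_isSl2Triple_of_wtSpace_ne_bot [CharZero F] {α : Module.Dual F H}
    (hα : (wtSpace H α : Submodule F G) ≠ ⊥) (hα0 : α ≠ 0) :
    ∃ (h : H) (e f : G), IsSl2Triple (h : G) e f ∧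
      e ∈ wtSpace H α ∧ f ∈ wtSpace H (-α) ∧ α h = 2 := by
  rw [wtSpace_eq_rootSpace, ne_eq, LieSubmodule.toSubmodule_eq_bot] at hα
  let root : LieModule.Weight F H G := ⟨α, hα⟩
  have root_isNonZero : root.IsNonZero := fun hz ↦ hα0 (DFunLike.coe_injective hz)
  obtain ⟨h, e, f, t, he, hf⟩ := IsKilling.exists_isSl2Triple_of_weight_isNonZero root_isNonZero
  obtain rfl : h = IsKilling.coroot root := t.h_eq_coroot root_isNonZero he hf
  refine ⟨IsKilling.coroot root, e, f, t, ?_, ?_, IsKilling.root_apply_coroot root_isNonZero⟩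
  · rwa [wtSpace_eq_rootSpace]
  · rwa [wtSpace_eq_rootSpace]

end WeightSpaces

/-- if `𝒢` is a finite dimensional split semisimple Lie algebra
over a field of characteristic zero, with splitting Cartan subalgebra `H` and
root system `R`, and `V` is a finite dimensional `𝒢`-module with weight space
decomposition with respect to `H` and set of weights `Π`, then for a nonzero
root `α` and a weight `lam` with `α + lam` again a weight, `𝒢_α ⬝ V_lam ≠ 0`. -/
theorem stmt_0 {F G V : Type*} [Field F] [CharZero F]
    [LieRing G] [LieAlgebra F G]
    [AddCommGroup V] [Module F V] [LieRingModule G V] [LieModule F G V]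
    [FiniteDimensional F G] [FiniteDimensional F V]
    [LieAlgebra.IsSemisimple F G]
    (H : LieSubalgebra F G) [H.IsCartanSubalgebra]
    (hGsplit : (⨆ χ : Module.Dual F H, (wtSpace H χ : Submodule F G)) = ⊤)
    (hVsplit : (⨆ χ : Module.Dual F H, (wtSpace H χ : Submodule F V)) = ⊤)
    (α lam : Module.Dual F H)
    (hα : (wtSpace H α : Submodule F G) ≠ ⊥) (hα0 : α ≠ 0)
    (hlam : (wtSpace H lam : Submodule F V) ≠ ⊥)
    (hsum : (wtSpace H (α + lam) : Submodule F V) ≠ ⊥) :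
    ∃ x ∈ (wtSpace H α : Submodule F G), ∃ v ∈ (wtSpace H lam : Submodule F V),
      ⁅x, v⁆ ≠ 0 := by
  have := isTriangularizable_of_iSup_wtSpace_eq_top hGsplit
  obtain ⟨h, e, f, t, he, hf, hαh⟩ := exists_isSl2Triple_of_wtSpace_ne_bot hα hα0
  obtain ⟨v, hv, hv0⟩ := (Submodule.ne_bot_iff _).mp hlam
  obtain ⟨w, hw, hw0⟩ := (Submodule.ne_bot_iff _).mp hsum
  have lie_h_w : ⁅(h : G), w⁆ = (lam h + 2) • w := by
    rw [hw h, LinearMap.add_apply, hαh, add_comm]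
  have lie_f_w_mem : ⁅f, w⁆ ∈ wtSpace H lam := by
    simpa only [neg_add_cancel_left] using lie_mem_wtSpace_add hf hw
  rcases lie_e_ne_zero_or_lie_e_lie_f_ne_zero t (hv h) hv0 lie_h_w hw0 with hev | hefw
  · exact ⟨e, he, v, hv, hev⟩
  · exact ⟨e, he, ⁅f, w⁆, lie_f_w_mem, hefw⟩
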